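/- Let R be a commutative Noetherian ring and M a finitely generated R-module. Then IPD(M) = V(ca_R(M)), where IPD(M) = {p ∈ Spec(R) : pd_{R_p}(M_p) = ∞} is the infinite projective dimension locus of M. -/

import Mathlib

open CategoryTheory

noncomputable section

universe u

variable (R : Type u) [CommRing R]

/-- The `n`-th Ext group of two `R`-modules, as an `R`-module. -/
abbrev ExtM (n : ℕ) (M N : ModuleCat.{u} R) : ModuleCat.{u} R :=
  ((Ext R (ModuleCat.{u} R) n).obj (Opposite.op M)).obj N

/-- The `n`-th cohomological annihilator of a module `M`:
elements `r` with `r • Ext^i(M, N) = 0` for all `i ≥ n` and all finitely generated `N`. -/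
def caN (n : ℕ) (M : ModuleCat.{u} R) : Ideal R where
  carrier := {r | ∀ i, n ≤ i → ∀ N : ModuleCat.{u} R, Module.Finite R N →
    ∀ x : ExtM R i M N, r • x = 0}
  zero_mem' := by intro i _ N _ x; simp
  add_mem' := by
    intro a b ha hb i hi N hN x
    rw [add_smul, ha i hi N hN x, hb i hi N hN x, add_zero]
  smul_mem' := by
    intro c r hr i hi N hN x
    simp only [smul_eq_mul, mul_smul, hr i hi N hN x, smul_zero]

/-- The cohomological annihilator `ca_R(M) = ⋃ₙ ca_R^n(M)`. -/
def ca (M : ModuleCat.{u} R) : Set R := ⋃ n : ℕ, (caN R n M : Set R)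

/-- The `n`-th co-cohomological annihilator of a module `M`. -/
def cocaN (n : ℕ) (M : ModuleCat.{u} R) : Ideal R where
  carrier := {r | ∀ i, n ≤ i → ∀ N : ModuleCat.{u} R, Module.Finite R N →
    ∀ x : ExtM R i N M, r • x = 0}
  zero_mem' := by intro i _ N _ x; simp
  add_mem' := by
    intro a b ha hb i hi N hN x
    rw [add_smul, ha i hi N hN x, hb i hi N hN x, add_zero]
  smul_mem' := by
    intro c r hr i hi N hN x
    simp only [smul_eq_mul, mul_smul, hr i hi N hN x, smul_zero]

/-- The co-cohomological annihilator `coca_R(M) = ⋃ₙ coca_R^n(M)`. -/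
def coca (M : ModuleCat.{u} R) : Set R := ⋃ n : ℕ, (cocaN R n M : Set R)

/-- `M` has projective dimension at most `n`: `Ext^i(M, -) = 0` for all `i > n`. -/
def projDimLE (n : ℕ) (M : ModuleCat.{u} R) : Prop :=
  ∀ i : ℕ, n < i → ∀ N : ModuleCat.{u} R, Subsingleton (ExtM R i M N)

/-- `M` has injective dimension at most `n`: `Ext^i(-, M) = 0` for all `i > n`. -/
def injDimLE (n : ℕ) (M : ModuleCat.{u} R) : Prop :=
  ∀ i : ℕ, n < i → ∀ N : ModuleCat.{u} R, Subsingleton (ExtM R i N M)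

/-- `K` is an `n`-th syzygy of `M` with respect to resolutions by
finitely generated projective modules. -/
def IsSyz : ℕ → ModuleCat.{u} R → ModuleCat.{u} R → Prop
  | 0, M, K => Nonempty (K ≃ₗ[R] M)
  | n + 1, M, K => ∃ (L P : ModuleCat.{u} R), IsSyz n M L ∧
      Module.Finite R P ∧ Module.Projective R P ∧
      ∃ f : P →ₗ[R] L, Function.Surjective f ∧ Nonempty (K ≃ₗ[R] LinearMap.ker f)

/-- `X` is a direct summand of `Y`. -/
def IsSummand (X Y : ModuleCat.{u} R) : Prop :=
  ∃ (i : X →ₗ[R] Y) (p : Y →ₗ[R] X), p.comp i = LinearMap.id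

/-- `X` is a direct summand of a finite direct sum of copies of `G`. -/
def IsSummandOfCopies (G X : ModuleCat.{u} R) : Prop :=
  ∃ k : ℕ, IsSummand R X (ModuleCat.of R (Fin k → G))

/-- The subcategories `thickⁿ(G)` of `mod R`. -/
def thickN (G : ModuleCat.{u} R) : ℕ → Set (ModuleCat.{u} R)
  | 0 => {X | Subsingleton X}
  | n + 1 => {X | ∃ (Y Y₁ Y₂ : ModuleCat.{u} R) (f : Y₁ →ₗ[R] Y) (g : Y →ₗ[R] Y₂),
      Function.Injective f ∧ Function.Surjective g ∧ LinearMap.ker g = LinearMap.range f ∧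
      ((Y₁ ∈ thickN G n ∧ IsSummandOfCopies R G Y₂) ∨
        (IsSummandOfCopies R G Y₁ ∧ Y₂ ∈ thickN G n)) ∧
      IsSummand R X Y}

/-- The balls `|G|ₙ` of Dao–Takahashi. -/
def ballN (G : ModuleCat.{u} R) : ℕ → Set (ModuleCat.{u} R)
  | 0 => {X | Subsingleton X}
  | n + 1 => {Y | ∃ (Y' Y₁ Y₂ : ModuleCat.{u} R)
      (f : Y₁ →ₗ[R] (ModuleCat.of R (Y × Y'))) (g : (ModuleCat.of R (Y × Y')) →ₗ[R] Y₂),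
      Function.Injective f ∧ Function.Surjective g ∧ LinearMap.ker g = LinearMap.range f ∧
      Y₁ ∈ ballN G n ∧ IsSummandOfCopies R G Y₂}

/-- A regular local ring: a Noetherian local ring whose maximal ideal can be
generated by `dim R` elements. -/
def IsRegularLocal (A : Type u) [CommRing A] [IsLocalRing A] : Prop :=
  IsNoetherianRing A ∧ ∃ s : Finset A, Ideal.span (↑s : Set A) = IsLocalRing.maximalIdeal A ∧
    (s.card : WithBot ℕ∞) = ringKrullDim A

/-- The localization of a module at a prime, as a module category object over the local ring. -/
abbrev locMod (p : PrimeSpectrum R) (M : ModuleCat.{u} R) :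
    ModuleCat.{u} (Localization.AtPrime p.asIdeal) :=
  ModuleCat.of (Localization.AtPrime p.asIdeal) (LocalizedModule p.asIdeal.primeCompl M)

/-- Depth of a module over a local ring, via vanishing of `Ext` from the residue field. -/
def depthE (A : Type u) [CommRing A] [IsLocalRing A] (N : ModuleCat.{u} A) : ℕ∞ :=
  sInf ((fun n : ℕ => (n : ℕ∞)) ''
    {n : ℕ | ¬ Subsingleton (ExtM A n (ModuleCat.of A (IsLocalRing.ResidueField A)) N)})

/-- The large restricted flat dimension of `M`. -/
def rfdE (M : ModuleCat.{u} R) : ℕ∞ :=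
  ⨆ p : PrimeSpectrum R,
    (depthE (Localization.AtPrime p.asIdeal)
        (ModuleCat.of (Localization.AtPrime p.asIdeal) (Localization.AtPrime p.asIdeal)) -
      depthE (Localization.AtPrime p.asIdeal) (locMod R p M))

/-- `r • f` factors through a finitely generated projective module. -/
def FactorsThroughProj (M : ModuleCat.{u} R) (f : M →ₗ[R] M) : Prop :=
  ∃ P : ModuleCat.{u} R, Module.Projective R P ∧ Module.Finite R P ∧
    ∃ (g : M →ₗ[R] P) (h : P →ₗ[R] M), h.comp g = f

/-- The annihilator of the stable endomorphism ring of `M`. -/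
def annStableEnd (M : ModuleCat.{u} R) : Set R :=
  {r | ∀ f : M →ₗ[R] M, FactorsThroughProj R M (r • f)}

/-- A resolving subcategory of `mod R`. -/
def IsResolving (C : Set (ModuleCat.{u} R)) : Prop :=
  (∀ P : ModuleCat.{u} R, Module.Finite R P → Module.Projective R P → P ∈ C) ∧
  (∀ X Y : ModuleCat.{u} R, Y ∈ C → IsSummand R X Y → X ∈ C) ∧
  (∀ (Y Y₁ Y₂ : ModuleCat.{u} R) (f : Y₁ →ₗ[R] Y) (g : Y →ₗ[R] Y₂),
    Function.Injective f → Function.Surjective g → LinearMap.ker g = LinearMap.range f →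
    Y₁ ∈ C → Y₂ ∈ C → Y ∈ C) ∧
  (∀ X ∈ C, ∀ K : ModuleCat.{u} R, IsSyz R 1 X K → K ∈ C)

/-- The smallest resolving subcategory containing `G`. -/
def resCl (G : ModuleCat.{u} R) : Set (ModuleCat.{u} R) :=
  ⋂₀ {C | IsResolving R C ∧ G ∈ C}

end

/-!
Let `P` be a resolution of `M` by finitely generated projectives. An element `r` annihilates
`Ext^i(M, N)` for all `i > n` and all finitely generated `N` if and only if the differential
`d : Pₙ₊₁ → Pₙ` splits up to `r`, that is `d h d = r d` for some `h : Pₙ → Pₙ₊₁`: such an `h`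
extends, by projectivity and exactness, to a homotopy from `r` to `0` in degrees above `n`, and
conversely it is what the vanishing of `r` on `Ext^{n+1}(M, im d)` provides. For `r = 1` this
says that `pd M ≤ n`. Splitting up to an element is compatible with localization: since `Pₙ` and
`Pₙ₊₁` are finitely presented, the localization of `d` at `S` splits if and only if `d` splits up
to some `r ∈ S`. Hence `pd (S⁻¹M) ≤ n` if and only if `S` meets `ca^{n+1}(M)`.
-/

section SplitsUpTo

variable {R M N : Type*} [CommRing R] [AddCommGroup M] [AddCommGroup N] [Module R M] [Module R N]

/-- The linear map `f` splits up to the scalar `r`: `f ∘ h ∘ f = r • f` for some `h` in the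
opposite direction. For `r = 1` and `f` a differential, this is the condition `d = d h d`
defining a split complex; it is used to express annihilation of `Ext` by `r` in terms of a
single differential of a projective resolution. -/
def SplitsUpTo (r : R) (f : M →ₗ[R] N) : Prop :=
  ∃ h : N →ₗ[R] M, f ∘ₗ h ∘ₗ f = r • f

theorem splitsUpTo_of_comp_eq_smul_rangeRestrict [Module.Projective R N] {r : R} {f : M →ₗ[R] N}
    {g : N →ₗ[R] LinearMap.range f} (hg : g ∘ₗ f = r • f.rangeRestrict) : SplitsUpTo r f := by
  obtain ⟨h, hh⟩ := Module.projective_lifting_property f.rangeRestrict g f.surjective_rangeRestrict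
  have lift_eq : f ∘ₗ h = (LinearMap.range f).subtype ∘ₗ g := by
    rw [← hh, ← LinearMap.comp_assoc, LinearMap.subtype_comp_codRestrict]
  refine ⟨h, ?_⟩
  rw [← LinearMap.comp_assoc, lift_eq, LinearMap.comp_assoc, hg, LinearMap.comp_smul,
    LinearMap.subtype_comp_codRestrict]

section Exact

variable {L : Type*} [AddCommGroup L] [Module R L] [Module.Projective R M]
  {e : L →ₗ[R] M} {f : M →ₗ[R] N} {r : R}

theorem exists_homotopy_of_exact (hef : Function.Exact e f) {h : N →ₗ[R] M}
    (hh : f ∘ₗ h ∘ₗ f = r • f) : ∃ k : M →ₗ[R] L, e ∘ₗ k + h ∘ₗ f = r • LinearMap.id := by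
  have range_le : LinearMap.range (r • LinearMap.id - h ∘ₗ f) ≤ LinearMap.range e := by
    rw [← hef.linearMap_ker_eq, LinearMap.range_le_ker_iff, LinearMap.comp_sub, hh,
      LinearMap.comp_smul, LinearMap.comp_id, sub_self]
  obtain ⟨k, hk⟩ := Module.projective_lifting_property e.rangeRestrict
    (LinearMap.codRestrict (LinearMap.range e) (r • LinearMap.id - h ∘ₗ f)
      fun x ↦ range_le ⟨x, rfl⟩) e.surjective_rangeRestrict
  refine ⟨k, eq_sub_iff_add_eq.mp (LinearMap.ext fun x ↦ ?_)⟩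
  exact congrArg Subtype.val (LinearMap.congr_fun hk x)

theorem SplitsUpTo.of_exact (hf : SplitsUpTo r f) (hef : Function.Exact e f) :
    SplitsUpTo r e := by
  obtain ⟨h, hh⟩ := hf
  obtain ⟨k, hk⟩ := exists_homotopy_of_exact hef hh
  refine ⟨k, ?_⟩
  calc e ∘ₗ k ∘ₗ e = (r • LinearMap.id - h ∘ₗ f) ∘ₗ e := by
        rw [← hk, add_sub_cancel_right, LinearMap.comp_assoc]
    _ = r • e := by
        rw [LinearMap.sub_comp, LinearMap.comp_assoc, hef.linearMap_comp_eq_zero,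
          LinearMap.comp_zero, sub_zero, LinearMap.smul_comp, LinearMap.id_comp]

theorem SplitsUpTo.exists_comp_eq_smul (hf : SplitsUpTo r f) (hef : Function.Exact e f)
    {N' : Type*} [AddCommGroup N'] [Module R N'] {φ : M →ₗ[R] N'} (hφ : φ ∘ₗ e = 0) :
    ∃ ψ : N →ₗ[R] N', ψ ∘ₗ f = r • φ := by
  obtain ⟨h, hh⟩ := hf
  obtain ⟨k, hk⟩ := exists_homotopy_of_exact hef hh
  refine ⟨φ ∘ₗ h, ?_⟩
  calc (φ ∘ₗ h) ∘ₗ f = φ ∘ₗ (e ∘ₗ k + h ∘ₗ f) := by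
        rw [LinearMap.comp_add, ← LinearMap.comp_assoc, ← LinearMap.comp_assoc, hφ,
          LinearMap.zero_comp, zero_add]
    _ = r • φ := by rw [hk, LinearMap.comp_smul, LinearMap.comp_id]

end Exact

section Localization

open IsLocalizedModule

variable (S : Submonoid R) (Rₛ : Type*) [CommRing Rₛ] [Algebra R Rₛ] [IsLocalization S Rₛ]
  {M' N' : Type*} [AddCommGroup M'] [AddCommGroup N'] [Module R M'] [Module R N']
  [Module Rₛ M'] [Module Rₛ N'] [IsScalarTower R Rₛ M'] [IsScalarTower R Rₛ N']
  (ιM : M →ₗ[R] M') (ιN : N →ₗ[R] N') [IsLocalizedModule S ιM] [IsLocalizedModule S ιN]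
  {f : M →ₗ[R] N}

theorem mapExtendScalars_comp {L L' : Type*} [AddCommGroup L] [AddCommGroup L'] [Module R L]
    [Module R L'] [Module Rₛ L'] [IsScalarTower R Rₛ L'] (ιL : L →ₗ[R] L')
    [IsLocalizedModule S ιL] (g : N →ₗ[R] L) (f : M →ₗ[R] N) :
    mapExtendScalars S ιM ιL Rₛ (g ∘ₗ f) =
      mapExtendScalars S ιN ιL Rₛ g ∘ₗ mapExtendScalars S ιM ιN Rₛ f := by
  ext x
  simp only [mapExtendScalars_apply_apply, LinearMap.comp_apply, map_comp' S ιM ιN ιL]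

theorem SplitsUpTo.mapExtendScalars {r : R} (hr : r ∈ S) (hf : SplitsUpTo r f) :
    SplitsUpTo 1 (mapExtendScalars S ιM ιN Rₛ f) := by
  obtain ⟨h, hh⟩ := hf
  obtain ⟨u, hu⟩ := IsLocalization.map_units Rₛ (⟨r, hr⟩ : S)
  have localized_eq := congrArg (IsLocalizedModule.mapExtendScalars S ιM ιN Rₛ) hh
  rw [mapExtendScalars_comp S Rₛ ιM ιM ιN, mapExtendScalars_comp S Rₛ ιM ιN ιM, map_smul,
    ← algebraMap_smul Rₛ r, ← hu] at localized_eq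
  refine ⟨(↑u⁻¹ : Rₛ) • IsLocalizedModule.mapExtendScalars S ιN ιM Rₛ h, ?_⟩
  rw [LinearMap.smul_comp, LinearMap.comp_smul, localized_eq, smul_smul, Units.inv_mul]

theorem exists_splitsUpTo_of_splitsUpTo_mapExtendScalars [Module.Finite R M]
    [Module.FinitePresentation R N] (hf : SplitsUpTo 1 (mapExtendScalars S ιM ιN Rₛ f)) :
    ∃ r ∈ S, SplitsUpTo r f := by
  obtain ⟨h', hh'⟩ := hf
  obtain ⟨⟨h, s⟩, hs⟩ := IsLocalizedModule.surj S (mapExtendScalars S ιN ιM Rₛ) h'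
  have localized_eq : mapExtendScalars S ιM ιN Rₛ (f ∘ₗ h ∘ₗ f) =
      mapExtendScalars S ιM ιN Rₛ (s • f) := by
    rw [mapExtendScalars_comp S Rₛ ιM ιM ιN, mapExtendScalars_comp S Rₛ ιM ιN ιM, ← hs,
      Submonoid.smul_def, Submonoid.smul_def, LinearMap.smul_comp, LinearMap.comp_smul, hh',
      one_smul, map_smul]
  obtain ⟨t, ht⟩ := Module.Finite.exists_smul_of_comp_eq_of_isLocalizedModule S ιN
    (f ∘ₗ h ∘ₗ f) (s • f) (by
      ext x
      simpa using LinearMap.congr_fun localized_eq (ιM x))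
  refine ⟨t * s, (t * s).2, (t : R) • h, ?_⟩
  rw [LinearMap.smul_comp, LinearMap.comp_smul, mul_smul]
  exact ht

end Localization

end SplitsUpTo

section FiniteResolution

universe u

variable {R : Type u} [CommRing R] [IsNoetherianRing R]

theorem epi_fgModuleCat_iff_surjective {X Y : FGModuleCat.{u} R} (f : X ⟶ Y) :
    Epi f ↔ Function.Surjective f.hom.hom := by
  rw [← (forget₂ (FGModuleCat.{u} R) (ModuleCat.{u} R)).epi_map_iff_epi,
    ModuleCat.epi_iff_surjective]
  rfl

theorem projective_fgModuleCat_iff (X : FGModuleCat.{u} R) :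
    Projective X ↔ Module.Projective R X := by
  constructor
  · intro _
    obtain ⟨n, f, hf⟩ := Module.Finite.exists_fin' R X
    have : Epi (FGModuleCat.ofHom f) := (epi_fgModuleCat_iff_surjective _).2 hf
    let s := Projective.factorThru (𝟙 X) (FGModuleCat.ofHom f)
    have section_eq : s ≫ FGModuleCat.ofHom f = 𝟙 X := Projective.factorThru_comp _ _
    refine Module.Projective.of_split s.hom.hom f (LinearMap.ext fun x ↦ ?_)
    exact ConcreteCategory.congr_hom section_eq x
  · intro _
    refine ⟨fun {E Y} f e he ↦ ?_⟩
    obtain ⟨g, hg⟩ := Module.projective_lifting_property e.hom.hom f.hom.hom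
      ((epi_fgModuleCat_iff_surjective e).1 he)
    exact ⟨FGModuleCat.ofHom g, by ext x; exact LinearMap.congr_fun hg x⟩

instance enoughProjectives_fgModuleCat : EnoughProjectives (FGModuleCat.{u} R) where
  presentation X := by
    obtain ⟨n, f, hf⟩ := Module.Finite.exists_fin' R X
    exact ⟨{
      p := FGModuleCat.of R (Fin n → R)
      projective := (projective_fgModuleCat_iff _).2
        (inferInstanceAs (Module.Projective R (Fin n → R)))
      f := FGModuleCat.ofHom f
      epi := (epi_fgModuleCat_iff_surjective _).2 hf }⟩

instance preservesProjectiveObjects_forget₂_fgModuleCat :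
    (forget₂ (FGModuleCat.{u} R) (ModuleCat.{u} R)).PreservesProjectiveObjects where
  projective_obj hX :=
    (IsProjective.iff_projective _).1 ((projective_fgModuleCat_iff _).1 hX)

theorem exists_projectiveResolution_finite (M : ModuleCat.{u} R) [Module.Finite R M] :
    ∃ P : ProjectiveResolution M, ∀ n, Module.Finite R (P.complex.X n) := by
  let P := ProjectiveResolution.of (FGModuleCat.of R M)
  refine ⟨(forget₂ (FGModuleCat.{u} R) (ModuleCat.{u} R)).mapProjectiveResolution P, fun n ↦ ?_⟩
  exact inferInstanceAs (Module.Finite R (P.complex.X n))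

end FiniteResolution

section Ext

universe u v

variable {R : Type u} [CommRing R]

theorem mem_annihilator_homology_iff (C : ShortComplex (ModuleCat.{v} R)) (r : R) :
    r ∈ Module.annihilator R C.homology ↔ ∀ y, C.g y = 0 → ∃ z, C.f z = r • y := by
  rw [C.moduleCatHomologyIso.toLinearEquiv.annihilator_eq]
  change r ∈ Module.annihilator R
    (LinearMap.ker C.g.hom ⧸ LinearMap.range C.moduleCatToCycles) ↔ _
  rw [Submodule.annihilator_quotient, Submodule.mem_colon]
  refine ⟨fun h y hy ↦ ?_, fun h y _ ↦ ?_⟩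
  · obtain ⟨z, hz⟩ := h (⟨y, hy⟩ : LinearMap.ker C.g.hom) trivial
    exact ⟨z, congrArg Subtype.val hz⟩
  · obtain ⟨z, hz⟩ := h y.1 y.2
    exact ⟨z, Subtype.ext hz⟩

variable {M : ModuleCat.{u} R} (P : ProjectiveResolution M)

theorem mem_annihilator_ext_succ_iff (N : ModuleCat.{u} R) (n : ℕ) (r : R) :
    r ∈ Module.annihilator R (ExtM R (n + 1) M N) ↔
      ∀ φ : P.complex.X (n + 1) →ₗ[R] N, φ ∘ₗ (P.complex.d (n + 2) (n + 1)).hom = 0 →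
        ∃ ψ : P.complex.X n →ₗ[R] N, ψ ∘ₗ (P.complex.d (n + 1) n).hom = r • φ := by
  let K := P.complex.linearYonedaObj R N
  let e : ExtM R (n + 1) M N ≅ (K.sc' n (n + 1) (n + 2)).homology :=
    P.isoExt (n + 1) N ≪≫ ShortComplex.homologyMapIso (K.isoSc' n (n + 1) (n + 2)
      (by simp) (by simp))
  rw [e.toLinearEquiv.annihilator_eq, mem_annihilator_homology_iff]
  refine ModuleCat.homEquiv.forall_congr fun φ ↦ imp_congr ModuleCat.hom_ext_iff ?_
  exact ModuleCat.homEquiv.exists_congr fun ψ ↦ ModuleCat.hom_ext_iff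

theorem exact_projectiveResolution (n : ℕ) :
    Function.Exact (P.complex.d (n + 2) (n + 1)).hom (P.complex.d (n + 1) n).hom :=
  (ShortComplex.ShortExact.moduleCat_exact_iff_function_exact _).1 (P.exact_succ n)

instance projective_projectiveResolution (n : ℕ) : Module.Projective R (P.complex.X n) :=
  (IsProjective.iff_projective _).2 (P.projective n)

variable {P} {n : ℕ} {r : R}

theorem splitsUpTo_d_of_le {m : ℕ} (hnm : n ≤ m) (hd : SplitsUpTo r (P.complex.d (n + 1) n).hom) :
    SplitsUpTo r (P.complex.d (m + 1) m).hom := by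
  induction m, hnm using Nat.le_induction with
  | base => exact hd
  | succ m _ ih => exact ih.of_exact (exact_projectiveResolution P m)

theorem mem_annihilator_ext_of_splitsUpTo_d (hd : SplitsUpTo r (P.complex.d (n + 1) n).hom)
    {i : ℕ} (hi : n < i) (N : ModuleCat.{u} R) :
    r ∈ Module.annihilator R (ExtM R i M N) := by
  obtain ⟨m, rfl⟩ := Nat.exists_eq_add_one_of_ne_zero (Nat.ne_zero_of_lt hi)
  rw [mem_annihilator_ext_succ_iff P]
  exact fun φ hφ ↦ (splitsUpTo_d_of_le (Nat.le_of_lt_succ hi) hd).exists_comp_eq_smul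
    (exact_projectiveResolution P m) hφ

theorem splitsUpTo_d_of_mem_annihilator_ext
    (hr : r ∈ Module.annihilator R
      (ExtM R (n + 1) M (ModuleCat.of R (LinearMap.range (P.complex.d (n + 1) n).hom)))) :
    SplitsUpTo r (P.complex.d (n + 1) n).hom := by
  have cocycle : (P.complex.d (n + 1) n).hom.rangeRestrict ∘ₗ
      (P.complex.d (n + 2) (n + 1)).hom = 0 := by
    ext x
    exact (exact_projectiveResolution P n).apply_apply_eq_zero x
  obtain ⟨g, hg⟩ := (mem_annihilator_ext_succ_iff P _ n r).1 hr _ cocycle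
  exact splitsUpTo_of_comp_eq_smul_rangeRestrict hg

variable (P n)

theorem mem_caN_succ_iff_splitsUpTo_d [Module.Finite R (P.complex.X (n + 1))] :
    r ∈ caN R (n + 1) M ↔ SplitsUpTo r (P.complex.d (n + 1) n).hom :=
  ⟨fun hr ↦ splitsUpTo_d_of_mem_annihilator_ext <| Module.mem_annihilator.2 <|
      hr (n + 1) le_rfl _ (Module.Finite.range (P.complex.d (n + 1) n).hom),
    fun hd _ hi N _ ↦ Module.mem_annihilator.1 (mem_annihilator_ext_of_splitsUpTo_d hd hi N)⟩

theorem projDimLE_iff_splitsUpTo_one_d :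
    projDimLE R n M ↔ SplitsUpTo 1 (P.complex.d (n + 1) n).hom := by
  simp_rw [projDimLE, ← Module.annihilator_eq_top_iff (R := R), Ideal.eq_top_iff_one]
  exact ⟨fun h ↦ splitsUpTo_d_of_mem_annihilator_ext (h (n + 1) n.lt_succ_self _),
    fun hd _ hi N ↦ mem_annihilator_ext_of_splitsUpTo_d hd hi N⟩

end Ext

section CohomologicalAnnihilator

universe u

variable {R : Type u} [CommRing R]

theorem projDimLE_congr {M M' : ModuleCat.{u} R} (e : M ≅ M') (n : ℕ) :
    projDimLE R n M ↔ projDimLE R n M' :=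
  forall₃_congr fun i _ N ↦ (((Ext R (ModuleCat.{u} R) i).mapIso e.op).app
    N).toLinearEquiv.toEquiv.subsingleton_congr.symm

theorem mem_ca_iff {M : ModuleCat.{u} R} {r : R} :
    r ∈ ca R M ↔ ∃ n, r ∈ caN R (n + 1) M := by
  refine Set.mem_iUnion.trans ⟨fun ⟨n, hr⟩ ↦ ⟨n, fun i hi ↦ hr i (n.le_succ.trans hi)⟩, ?_⟩
  exact fun ⟨n, hr⟩ ↦ ⟨n + 1, hr⟩

theorem projDimLE_localizedModule_iff {M : ModuleCat.{u} R} (P : ProjectiveResolution M)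
    [∀ k, Module.Finite R (P.complex.X k)] (S : Submonoid R) (n : ℕ) :
    projDimLE (Localization S) n (ModuleCat.of (Localization S) (LocalizedModule S M)) ↔
      ∃ r ∈ S, r ∈ caN R (n + 1) M := by
  have (k : ℕ) : Module.FinitePresentation R (P.complex.X k) :=
    Module.finitePresentation_of_projective R _
  let shrinkIso : (ModuleCat.localizedModuleFunctor.{u} S).obj M ≅
      ModuleCat.of (Localization S) (LocalizedModule S M) :=
    (Shrink.linearEquiv.{u} (Localization S) (LocalizedModule S M)).toModuleIso
  rw [← projDimLE_congr shrinkIso, projDimLE_iff_splitsUpTo_one_d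
    ((ModuleCat.localizedModuleFunctor.{u} S).mapProjectiveResolution P)]
  simp_rw [mem_caN_succ_iff_splitsUpTo_d P]
  let ι (k : ℕ) := (P.complex.X k).localizedModuleMkLinearMap S
  exact ⟨exists_splitsUpTo_of_splitsUpTo_mapExtendScalars S (Localization S) (ι (n + 1)) (ι n),
    fun ⟨_, hr, hd⟩ ↦ hd.mapExtendScalars S (Localization S) (ι (n + 1)) (ι n) hr⟩

theorem stmt5_general {M : ModuleCat.{u} R} (P : ProjectiveResolution M)
    [∀ k, Module.Finite R (P.complex.X k)] :
    {p : PrimeSpectrum R |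
        ∀ n : ℕ, ¬ projDimLE (Localization.AtPrime p.asIdeal) n (locMod R p M)} =
      {p : PrimeSpectrum R | ca R M ⊆ (p.asIdeal : Set R)} := by
  ext p
  calc (∀ n, ¬ projDimLE (Localization.AtPrime p.asIdeal) n (locMod R p M))
      ↔ ∀ n, ¬ ∃ r ∈ p.asIdeal.primeCompl, r ∈ caN R (n + 1) M :=
        forall_congr' fun n ↦ not_congr (projDimLE_localizedModule_iff P _ n)
    _ ↔ ca R M ⊆ p.asIdeal := by
        simp only [Set.subset_def, mem_ca_iff, Ideal.mem_primeCompl_iff, SetLike.mem_coe]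
        grind

end CohomologicalAnnihilator

/-- `IPD(M) = V(ca_R(M))`. -/
theorem stmt5 (R : Type u) [CommRing R] [IsNoetherianRing R]
    (M : ModuleCat.{u} R) [Module.Finite R M] :
    {p : PrimeSpectrum R |
        ∀ n : ℕ, ¬ projDimLE (Localization.AtPrime p.asIdeal) n (locMod R p M)} =
      {p : PrimeSpectrum R | ca R M ⊆ (p.asIdeal : Set R)} := by
  obtain ⟨P, _⟩ := exists_projectiveResolution_finite M
  exact stmt5_general P
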